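/- Let p ≥ 4 be an even integer, ξ(q) = q^p/p, so ξ'(q) = q^{p−1}, and θ(q) = qξ'(q) − ξ(q) = ((p−1)/p) q^p. Let x > 0 be the unique positive solution of 1/p = ((1+x)/x²) log(1+x) − 1/x, and set δ = x/(1+x) and γ = ((p−1)/p) x²/(1+x). Suppose β > 0, m ∈ (0,1] and q ∈ (0,1) satisfy the critical point equations β² ξ'(q) = m^{-1}(1/(1−q) − 1/(1−q+mq)) and β² ξ(q) = m^{-2} log((1−q+qm)/(1−q)) − (q/m)·1/(1−q+qm). Then qm = x(1−q), m β² ξ'(q)(1−q) = δ, and m² β² θ(q) = γ. -/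

import Mathlib

lemma aux_anti : StrictAntiOn (fun y : ℝ => ((1 + y) * Real.log (1 + y) - y) / y ^ 2)
    (Set.Ioi 0) := by
  have hd : ∀ y : ℝ, 0 < y → HasDerivAt
      (fun y : ℝ => ((1 + y) * Real.log (1 + y) - y) / y ^ 2)
      (((1 * Real.log (1 + y) + (1 + y) * (1 / (1 + y)) - 1) * y ^ 2 -
        ((1 + y) * Real.log (1 + y) - y) * (2 * y)) / (y ^ 2) ^ 2) y := by
    intro y hy
    have h1 : HasDerivAt (fun y : ℝ => 1 + y) 1 y := (hasDerivAt_id y).const_add 1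
    have h2 := h1.log (by positivity)
    have h3 : HasDerivAt (fun y : ℝ => y ^ 2) (2 * y) y := by
      simpa using hasDerivAt_pow 2 y
    exact ((h1.mul h2).sub (hasDerivAt_id y)).div h3 (by positivity)
  apply strictAntiOn_of_deriv_neg (convex_Ioi 0)
  · intro y hy
    exact (hd y hy).continuousAt.continuousWithinAt
  · intro y hy
    rw [interior_Ioi] at hy
    have hy' : 0 < y := hy
    rw [(hd y hy').deriv]
    apply div_neg_of_neg_of_pos _ (by positivity)
    have h := Real.lt_log_one_add_of_pos hy'
    rw [div_lt_iff₀ (by positivity)] at h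
    have h4 : (1 + y) * (1 / (1 + y)) = 1 := by field_simp
    rw [h4]
    nlinarith [mul_pos hy' (sub_pos.2 h)]

theorem stmt9 (p : ℕ) (hp : 4 ≤ p) (hpe : Even p) (x δ γ β m q : ℝ)
    (hx : 0 < x)
    (hxeq : 1 / (p : ℝ) = (1 + x) / x ^ 2 * Real.log (1 + x) - 1 / x)
    (hδ : δ = x / (1 + x))
    (hγ : γ = ((p : ℝ) - 1) / p * x ^ 2 / (1 + x))
    (hβ : 0 < β) (hm : m ∈ Set.Ioc (0 : ℝ) 1) (hq : q ∈ Set.Ioo (0 : ℝ) 1)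
    (hc1 : β ^ 2 * q ^ (p - 1) = m⁻¹ * (1 / (1 - q) - 1 / (1 - q + m * q)))
    (hc2 : β ^ 2 * (q ^ p / p)
      = (1 / m ^ 2) * Real.log ((1 - q + q * m) / (1 - q)) - (q / m) * (1 / (1 - q + q * m))) :
    q * m = x * (1 - q) ∧
    m * β ^ 2 * q ^ (p - 1) * (1 - q) = δ ∧
    m ^ 2 * β ^ 2 * (((p : ℝ) - 1) / p * q ^ p) = γ := by
  obtain ⟨hm0, -⟩ := hm
  obtain ⟨hq0, hq1⟩ := hq
  have hr : 0 < 1 - q := by linarith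
  obtain ⟨y, hy⟩ : ∃ y, y = q * m / (1 - q) := ⟨_, rfl⟩
  have hy0 : 0 < y := by rw [hy]; positivity
  have hqm : q * m = y * (1 - q) := by rw [hy]; field_simp
  have hp0 : (0 : ℝ) < p := by exact_mod_cast (by omega : 0 < p)
  have hden : 1 - q + q * m = (1 - q) * (1 + y) := by rw [hqm]; ring
  have hA : m * β ^ 2 * q ^ (p - 1) * (1 - q) = y / (1 + y) := by
    rw [mul_assoc m, hc1, mul_comm m q, hden]
    field_simp
    ring
  have hpow : q ^ p = q ^ (p - 1) * q := by
    rw [← pow_succ]; congr 1; omega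
  have hB : m ^ 2 * β ^ 2 * q ^ p = y ^ 2 / (1 + y) := by
    have : m ^ 2 * β ^ 2 * q ^ p = (m * β ^ 2 * q ^ (p - 1) * (1 - q)) * y := by
      rw [hpow]
      linear_combination (m * β ^ 2 * q ^ (p - 1)) * hqm
    rw [this, hA]; ring
  have hC : y ^ 2 / (1 + y) / p = Real.log (1 + y) - y / (1 + y) := by
    have h1 : (1 - q + q * m) / (1 - q) = 1 + y := by rw [hden]; field_simp
    rw [h1, hden] at hc2
    have h2 : m ^ 2 * (β ^ 2 * (q ^ p / p)) = Real.log (1 + y) - q * m / ((1 - q) * (1 + y)) := by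
      rw [hc2]; field_simp
    rw [hqm] at h2
    rw [← hB]
    have h3 : y * (1 - q) / ((1 - q) * (1 + y)) = y / (1 + y) := by field_simp
    rw [h3] at h2
    rw [← h2]; ring
  have hD : ((1 + y) * Real.log (1 + y) - y) / y ^ 2 = 1 / p := by
    have h5 : (1 + y) * Real.log (1 + y) - y = y ^ 2 / p := by
      have : (1 + y) * (y ^ 2 / (1 + y) / p) = y ^ 2 / p := by field_simp
      rw [← this, hC]; field_simp
    rw [h5]; field_simp
  have hE : ((1 + x) * Real.log (1 + x) - x) / x ^ 2 = 1 / p := by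
    rw [hxeq]; field_simp
  have hyx : y = x := aux_anti.injOn hy0 hx (hD.trans hE.symm)
  subst hyx
  refine ⟨hqm, hA.trans hδ.symm, ?_⟩
  rw [hγ]
  linear_combination ((p : ℝ) - 1) / p * hB
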